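/- Let K be a field and let S = node([S_1,…,S_m]) and T = node([T_1,…,T_n]) be finite planar reduced rooted trees of arities m ≥ 2 and n ≥ 2. For 2 ≤ k ≤ m+n set Γ̄_k(m,n) := Γ_k(1,1) ∪ Γ_k(1,n) ∪ Γ_k(m,1) ∪ Γ_k(m,n), and for (α,β) ∈ Γ̄_k(m,n) define R_{(α,β)} in the free K-module on PRT' as follows (γ[i] denotes the i-th smallest element of a subset γ of {1,…,k}; graftings node are extended K-multilinearly): if α = {1} and β = {2}, R_{(α,β)} = S·T; if α = {2} and β = {1}, R_{(α,β)} = T·S; if α = {ν} and #β = n, then R_{(α,β)} = node([T_1,…,T_{ν−1}, S, T_ν,…,T_n]) when k = n+1, and R_{(α,β)} = node([T_1,…,T_{ν−1}, T_ν ⧢ S, T_{ν+1},…,T_n]) when k = n; symmetrically, if β = {μ} and #α = m, then R_{(α,β)} = node([S_1,…,S_{μ−1}, T, S_μ,…,S_m]) when k = m+1, and R_{(α,β)} = node([S_1,…,S_{μ−1}, S_μ ⧢ T, S_{μ+1},…,S_m]) when k = m; if #α = m and #β = n, then R_{(α,β)} = node([P_1,…,P_k]) where P_j = S_i if j ∈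 α∖β with α[i] = j, P_j = T_i if j ∈ β∖α with β[i] = j, and P_j = S_i ⧢ T_l if j ∈ α∩β with α[i] = j and β[l] = j. Then S ⧢ T = Σ_{k=2}^{m+n} Σ_{(α,β) ∈ Γ̄_k(m,n)} R_{(α,β)}. -/

import Mathlib

inductive PTree : Type where
  | node : List PTree → PTree

namespace PTree

/-- the single-vertex tree -/
def x : PTree := node []

/-- the number of leaves of a tree -/
def deg : PTree → ℕ
  | node l => max 1 (l.attach.map fun t => deg t.1).sum
decreasing_by
  have := List.sizeOf_lt_of_mem t.2
  simp; omega

/-- a tree is reduced if no vertex has arity 1 -/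
inductive Reduced : PTree → Prop where
  | node (l : List PTree) (hlen : l.length ≠ 1) (h : ∀ t ∈ l, Reduced t) :
      Reduced (node l)

/-- the reduction of a tree -/
def red : PTree → PTree
  | node [t] => red t
  | node l => node (l.attach.map fun t => red t.1)
decreasing_by
  · simp; omega
  · have := List.sizeOf_lt_of_mem t.2
    simp; omega

mutual
/-- the spanning subtree `T_I` determined by a set `I ⊆ range (deg T)` of leaf positions
(counted from the left, starting at `0`) -/
def sub : PTree → Finset ℕ → PTree
  | node l, I => node (subList l I)
/-- auxiliary: the list of spanning subtrees of the children, children without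
selected leaves being dropped -/
def subList : List PTree → Finset ℕ → List PTree
  | [], _ => []
  | t :: ts, I =>
      (if (I.filter (· < t.deg)).Nonempty then [sub t (I.filter (· < t.deg))] else [])
        ++ subList ts ((I.filter fun j => t.deg ≤ j).image fun j => j - t.deg)
end

/-- the contraction `T|I`: the reduction of the spanning subtree, `1` (i.e. `none`) if `I = ∅` -/
def contract (T : PTree) (I : Finset ℕ) : Option PTree :=
  if I = ∅ then none else some (red (sub T I))

end PTree

/-- `PRT'`: finite planar rooted trees together with the empty tree `1 = none` -/
abbrev OT := Option PTree

/-- `deg` on `PRT'` -/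
def degO (o : OT) : ℕ := o.elim 0 PTree.deg

/-- membership in `PRT'` = reduced trees together with the empty tree `1` -/
def ROT (o : OT) : Prop := ∀ t, o = some t → t.Reduced

/-- contraction on `PRT'` -/
def contractO : OT → Finset ℕ → OT
  | none, _ => none
  | some t, I => PTree.contract t I

open Classical in
/-- `N_{S,T}(V)` as a finite set of subsets of the set of leaf positions of `V` -/
noncomputable def NFinset (S T V : OT) : Finset (Finset ℕ) :=
  (Finset.range (degO V)).powerset.filter fun I =>
    contractO V I = S ∧ contractO V (Finset.range (degO V) \ I) = T

/-- `#N_{S,T}(V)` -/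
noncomputable def Ncount (S T V : OT) : ℕ := (NFinset S T V).card

/-- the free `K`-module on `PRT'` (realized inside the free module on all of `Option PTree`;
the elements of the free module on `PRT'` are those whose support satisfies `ROT`) -/
abbrev AMod (K : Type) [Field K] := OT →₀ K

/-- `f` belongs to the free `K`-module on `PRT'` -/
def suppRed (K : Type) [Field K] (f : AMod K) : Prop := ∀ t ∈ f.support, ROT t

/-- the planar shuffle product `S ⧢ T = Σ_{V ∈ PRT'} #N_{S,T}(V)·V` of two monomials -/
noncomputable def shuffleM (K : Type) [Field K] (S T : OT) : AMod K :=
  ∑ᶠ (V : OT) (_ : ROT V), Finsupp.single V ((Ncount S T V : K))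

/-- the `K`-bilinear extension of the planar shuffle product -/
noncomputable def shuffleF (K : Type) [Field K] (f g : AMod K) : AMod K :=
  f.sum fun S a => g.sum fun T b => (a * b) • shuffleM K S T

/-- tensor-like product of a list of module elements, as a finitely supported
function on lists of basis elements -/
noncomputable def listProd (K : Type) [Field K] {σ : Type} : List (σ →₀ K) → (List σ →₀ K)
  | [] => Finsupp.single [] 1
  | f :: fs => f.sum fun t a => (listProd K fs).sum fun ts b => Finsupp.single (t :: ts) (a * b)

/-- the `K`-multilinear extension of an operation on basis elements -/
noncomputable def mulExt (K : Type) [Field K] {σ τ : Type} (op : List σ → τ)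
    (l : List (σ →₀ K)) : τ →₀ K :=
  (listProd K l).sum fun ts c => Finsupp.single (op ts) c

/-- `gr` : delete all entries equal to `1`, then return `1` if no entry remains,
the unique entry if exactly one remains, and the grafting `node` otherwise -/
def grO (ts : List OT) : OT :=
  match ts.reduceOption with
  | [] => none
  | [t] => some t
  | l => some (PTree.node l)

/-- the `K`-multilinear extension of `gr` -/
noncomputable def grF (K : Type) [Field K] (l : List (AMod K)) : AMod K := mulExt K grO l

/-- the `K`-multilinear extension of the grafting `node` (junk value `0` on lists
containing the empty tree `1`, which never occurs in its uses here) -/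
noncomputable def nodeF (K : Type) [Field K] (l : List (AMod K)) : AMod K :=
  (listProd K l).sum fun ts c =>
    match (ts.mapM (id : Option PTree → Option PTree) : Option (List PTree)) with
    | some l' => Finsupp.single (some (PTree.node l')) c
    | none => 0

/-- `Γ_k(m,n)` as a set of pairs of subsets of `{0,…,k-1}` (0-indexed) -/
def GammaSet (k m n : ℕ) : Set (Finset ℕ × Finset ℕ) :=
  {p | p.1 ⊆ Finset.range k ∧ p.2 ⊆ Finset.range k ∧
       p.1.card = m ∧ p.2.card = n ∧ p.1 ∪ p.2 = Finset.range k}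

/-- `Γ_k(m,n)` as a finite set -/
def GammaF (k m n : ℕ) : Finset (Finset ℕ × Finset ℕ) :=
  ((Finset.range k).powerset ×ˢ (Finset.range k).powerset).filter fun p =>
    p.1.card = m ∧ p.2.card = n ∧ p.1 ∪ p.2 = Finset.range k

/-- `Γ̄_k(m,n) := Γ_k(1,1) ∪ Γ_k(1,n) ∪ Γ_k(m,1) ∪ Γ_k(m,n)` -/
def GammaBar (k m n : ℕ) : Finset (Finset ℕ × Finset ℕ) :=
  GammaF k 1 1 ∪ GammaF k 1 n ∪ GammaF k m 1 ∪ GammaF k m n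

/-- the `i`-th smallest element of a finite set of naturals (0-indexed; junk `0` out of range) -/
def fnth (γ : Finset ℕ) (i : ℕ) : ℕ := (γ.sort (· ≤ ·)).getD i 0

/-- splitting of a set of leaf positions of a grafting `node [T_1,…,T_m]` into the
sets of leaf positions `I_j = I ∩ L(T_j)` of the children (each shifted to start at `0`) -/
def splitParts : List PTree → Finset ℕ → List (Finset ℕ)
  | [], _ => []
  | t :: ts, I =>
      I.filter (· < t.deg) ::
        splitParts ts ((I.filter fun j => t.deg ≤ j).image fun j => j - t.deg)

open Classical in
/-- the polynomial `R_{(α,β)}` attached to `(α,β) ∈ Γ̄_k(m,n)` (0-indexed, so that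
`α ∪ β = {0,…,k-1}`), for `S = node ls` of arity `m` and `T = node lt` of arity `n` -/
noncomputable def Rab (K : Type) [Field K] (ls lt : List PTree) (k : ℕ)
    (p : Finset ℕ × Finset ℕ) : AMod K :=
  let α := p.1
  let β := p.2
  let S := PTree.node ls
  let T := PTree.node lt
  if α.card = 1 ∧ β.card = 1 then
    -- Case 1
    (if α = {0} then Finsupp.single (some (PTree.node [S, T])) 1
     else Finsupp.single (some (PTree.node [T, S])) 1)
  else if α.card = 1 then
    -- Case 2 : `α = {ν}`, `#β = n`
    let ν := fnth α 0
    if k = lt.length + 1 then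
      Finsupp.single (some (PTree.node (lt.insertIdx ν S))) 1
    else
      nodeF K (lt.mapIdx fun i t =>
        if i = ν then shuffleM K (some t) (some S) else Finsupp.single (some t) 1)
  else if β.card = 1 then
    -- Case 2' : `β = {μ}`, `#α = m`
    let μ := fnth β 0
    if k = ls.length + 1 then
      Finsupp.single (some (PTree.node (ls.insertIdx μ T))) 1
    else
      nodeF K (ls.mapIdx fun i s =>
        if i = μ then shuffleM K (some s) (some T) else Finsupp.single (some s) 1)
  else
    -- Case 3 : `#α = m`, `#β = n`
    nodeF K ((List.range k).map fun j =>
      if j ∈ α ∧ j ∉ β then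
        Finsupp.single (some (ls.getD ((α.filter (· < j)).card) PTree.x)) 1
      else if j ∈ β ∧ j ∉ α then
        Finsupp.single (some (lt.getD ((β.filter (· < j)).card) PTree.x)) 1
      else
        shuffleM K (some (ls.getD ((α.filter (· < j)).card) PTree.x))
          (some (lt.getD ((β.filter (· < j)).card) PTree.x)))

/-- sum of the degrees of a list of trees -/
def sdeg (l : List PTree) : ℕ := (l.map PTree.deg).sum

namespace PTree

theorem deg_node (l : List PTree) : (node l).deg = max 1 (sdeg l) := by
  rw [deg, sdeg, List.attach_map_val (l := l) (f := deg)]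

theorem deg_pos (t : PTree) : 1 ≤ t.deg := by
  cases t with
  | node l => rw [deg_node]; exact le_max_left _ _

theorem reduced_node {l : List PTree} :
    (node l).Reduced ↔ l.length ≠ 1 ∧ ∀ t ∈ l, Reduced t := by
  constructor
  · intro h
    cases h with
    | node _ h1 h2 => exact ⟨h1, h2⟩
  · rintro ⟨h1, h2⟩
    exact .node l h1 h2

theorem red_singleton (t : PTree) : red (node [t]) = red t := by
  rw [red]

theorem red_node (l : List PTree) (h : l.length ≠ 1) : red (node l) = node (l.map red) := by
  rw [red, List.attach_map_val (l := l) (f := red)]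
  rintro t rfl
  simp at h

theorem red_eq_self {t : PTree} (h : t.Reduced) : red t = t := by
  induction h with
  | node l hlen h ih =>
    rw [red_node l hlen]
    congr 1
    conv_rhs => rw [← List.map_id l]
    exact List.map_congr_left ih

theorem deg_red : ∀ t : PTree, deg (red t) = deg t
  | node l => by
    by_cases h : l.length = 1
    · obtain ⟨t, ht⟩ := List.length_eq_one_iff.1 h
      have hs := List.sizeOf_lt_of_mem (show t ∈ l by simp [ht])
      rw [ht, red_singleton, deg_red t, deg_node]
      simp [sdeg, deg_pos]
    · rw [red_node l h, deg_node, deg_node]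
      congr 1
      simp only [sdeg, List.map_map]
      congr 1
      apply List.map_congr_left
      intro t ht
      exact deg_red t
decreasing_by
  · simp; omega
  · have := List.sizeOf_lt_of_mem ht
    simp; omega

end PTree

theorem sdeg_cons (t : PTree) (ts : List PTree) : sdeg (t :: ts) = t.deg + sdeg ts := by
  simp [sdeg]

theorem sdeg_pos {l : List PTree} (h : l ≠ []) : 1 ≤ sdeg l := by
  cases l with
  | nil => exact absurd rfl h
  | cons t ts => rw [sdeg_cons]; have := t.deg_pos; omega

/-- low part -/
def lo (a : ℕ) (I : Finset ℕ) : Finset ℕ := I.filter (· < a)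
/-- high part -/
def hi (a : ℕ) (I : Finset ℕ) : Finset ℕ := (I.filter fun j => a ≤ j).image fun j => j - a

theorem mem_lo {a : ℕ} {I : Finset ℕ} {j : ℕ} : j ∈ lo a I ↔ j ∈ I ∧ j < a := by simp [lo]
theorem mem_hi {a : ℕ} {I : Finset ℕ} {j : ℕ} : j ∈ hi a I ↔ a + j ∈ I := by
  simp only [hi, Finset.mem_image, Finset.mem_filter]
  constructor
  · rintro ⟨i, ⟨h1, h2⟩, rfl⟩
    rwa [Nat.add_sub_cancel' h2]
  · intro h
    exact ⟨a + j, ⟨h, by omega⟩, by omega⟩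

theorem card_lo_hi (a : ℕ) (I : Finset ℕ) : (lo a I).card + (hi a I).card = I.card := by
  rw [hi, Finset.card_image_of_injOn]
  · rw [lo, ← Finset.card_filter_add_card_filter_not (s := I) (· < a)]
    simp
  · intro i hi j hj h
    simp at hi hj h
    omega

theorem lo_range (a b : ℕ) : lo a (Finset.range (a + b)) = Finset.range a := by
  ext; simp [mem_lo]; omega
theorem hi_range (a b : ℕ) : hi a (Finset.range (a + b)) = Finset.range b := by
  ext; simp [mem_hi]
theorem lo_sdiff (a b : ℕ) (I) : lo a (Finset.range (a + b) \ I) = Finset.range a \ lo a I := by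
  ext; simp [mem_lo]; grind
theorem hi_sdiff (a b : ℕ) (I) : hi a (Finset.range (a + b) \ I) = Finset.range b \ hi a I := by
  ext; simp [mem_hi]
theorem lo_sub {a b : ℕ} {I} (_h : I ⊆ Finset.range (a + b)) : lo a I ⊆ Finset.range a := by
  intro j; simp [mem_lo]
theorem hi_sub {a b : ℕ} {I} (h : I ⊆ Finset.range (a + b)) : hi a I ⊆ Finset.range b := by
  intro j hj; have := h (mem_hi.1 hj); simpa using this

theorem sum_powerset_range_add {M : Type*} [AddCommMonoid M] (a b : ℕ)
    (F : Finset ℕ → Finset ℕ → M) :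
    ∑ I ∈ (Finset.range (a + b)).powerset, F (lo a I) (hi a I)
      = ∑ I₁ ∈ (Finset.range a).powerset, ∑ I₂ ∈ (Finset.range b).powerset, F I₁ I₂ := by
  rw [← Finset.sum_product']
  refine Finset.sum_bij' (fun I _ => (lo a I, hi a I))
    (fun p _ => p.1 ∪ p.2.image (a + ·)) ?_ ?_ ?_ ?_ ?_
  · intro I hI
    rw [Finset.mem_powerset] at hI
    simp only [Finset.mem_product, Finset.mem_powerset]
    exact ⟨lo_sub hI, hi_sub hI⟩
  · rintro ⟨p, q⟩ h
    simp only [Finset.mem_product, Finset.mem_powerset] at h ⊢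
    intro j hj
    simp only [Finset.mem_union, Finset.mem_image] at hj
    rcases hj with hj | ⟨i, hi, rfl⟩
    · have := h.1 hj; simp at this ⊢; omega
    · have := h.2 hi; simp at this ⊢; omega
  · intro I hI
    ext j
    simp only [Finset.mem_union, Finset.mem_image, mem_lo, mem_hi]
    constructor
    · rintro (h | ⟨i, h, rfl⟩)
      exacts [h.1, h]
    · intro h
      by_cases hj : j < a
      · exact .inl ⟨h, hj⟩
      · exact .inr ⟨j - a, by rwa [Nat.add_sub_cancel' (by omega)], by omega⟩
  · rintro ⟨p, q⟩ h
    simp only [Finset.mem_product, Finset.mem_powerset] at h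
    ext j
    · simp only [mem_lo, Finset.mem_union, Finset.mem_image]
      constructor
      · rintro ⟨h1 | ⟨i, h1, rfl⟩, h2⟩
        · exact h1
        · omega
      · intro hj
        have := h.1 hj
        simp at this
        exact ⟨.inl hj, this⟩
    · simp only [mem_hi, Finset.mem_union, Finset.mem_image]
      constructor
      · rintro (h1 | ⟨i, h1, h2⟩)
        · have := h.1 h1
          simp at this
        · have : i = j := by omega
          exact this ▸ h1
      · intro hj
        exact .inr ⟨j, hj, rfl⟩
  · intro I hI; rfl

namespace PTree

theorem subList_cons (t : PTree) (ts : List PTree) (I : Finset ℕ) :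
    subList (t :: ts) I = (if (lo t.deg I).Nonempty then [sub t (lo t.deg I)] else [])
      ++ subList ts (hi t.deg I) := by
  rw [subList]; rfl

mutual
theorem sub_range : ∀ t : PTree, sub t (Finset.range t.deg) = t
  | node l => by
    rw [sub, deg_node]
    cases l with
    | nil => rw [subList]
    | cons t ts =>
      rw [max_eq_right (sdeg_pos (by simp)), subList_range]
theorem subList_range : ∀ l : List PTree, subList l (Finset.range (sdeg l)) = l
  | [] => by rw [subList]
  | t :: ts => by
    rw [subList_cons, sdeg_cons, lo_range, hi_range, subList_range ts, sub_range t, if_pos]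
    · rfl
    · have := t.deg_pos
      simp; omega
end

mutual
theorem deg_sub : ∀ (t : PTree) (I : Finset ℕ), I ⊆ Finset.range t.deg → I.Nonempty →
    (sub t I).deg = I.card
  | node l, I => by
    intro hI hne
    have h1 := Finset.card_pos.2 hne
    rw [sub, deg_node]
    cases l with
    | nil =>
      have := Finset.card_le_card hI
      rw [deg_node] at this
      simp [sdeg] at this
      rw [subList]
      simp [sdeg]; omega
    | cons t ts =>
      rw [deg_node, max_eq_right (sdeg_pos (by simp))] at hI
      rw [sdeg_subList _ _ hI]
      omega
theorem sdeg_subList : ∀ (l : List PTree) (I : Finset ℕ), I ⊆ Finset.range (sdeg l) →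
    sdeg (subList l I) = I.card
  | [], I => by
    intro h
    simp [sdeg] at h
    subst h
    rw [subList]; simp [sdeg]
  | t :: ts, I => by
    intro h
    rw [sdeg_cons] at h
    rw [subList_cons, ← card_lo_hi t.deg I]
    have h2 := sdeg_subList ts (hi t.deg I) (hi_sub h)
    split_ifs with hne
    · rw [List.singleton_append, sdeg_cons, h2, deg_sub t _ (lo_sub h) hne]
    · rw [Finset.not_nonempty_iff_eq_empty] at hne
      rw [List.nil_append, h2, hne]; simp
end

theorem contract_range {t : PTree} (h : t.Reduced) : contract t (Finset.range t.deg) = some t := by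
  rw [contract, if_neg, sub_range, red_eq_self h]
  have := t.deg_pos
  simp; omega

theorem contract_empty (t : PTree) : contract t ∅ = none := by simp [contract]

theorem contract_eq_none {t : PTree} {I} : contract t I = none ↔ I = ∅ := by
  simp [contract]

theorem deg_contract {t u : PTree} {I} (hI : I ⊆ Finset.range t.deg)
    (h : contract t I = some u) : u.deg = I.card := by
  rw [contract] at h
  split_ifs at h with h1
  obtain rfl := Option.some.inj h
  rw [deg_red, deg_sub t I hI (Finset.nonempty_iff_ne_empty.2 h1)]

theorem finite_reduced (N : ℕ) : {t : PTree | t.Reduced ∧ t.deg ≤ N}.Finite := by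
  induction N with
  | zero =>
    convert Set.finite_empty
    ext t
    have := t.deg_pos
    simp; intro; omega
  | succ N ih =>
    have := ih.to_subtype
    have hf := List.finite_length_le {t : PTree | t.Reduced ∧ t.deg ≤ N} (N + 1)
    refine (hf.image fun l => node (l.map Subtype.val)).subset ?_
    rintro ⟨l⟩ ⟨hr, hd⟩
    rw [reduced_node] at hr
    have hlen : ∀ l : List PTree, l.length ≤ sdeg l := by
      intro l
      induction l with
      | nil => simp
      | cons t ts ih => rw [sdeg_cons]; have := t.deg_pos; simp; omega
    have hmem : ∀ (l : List PTree), ∀ t ∈ l, t.deg + l.length ≤ sdeg l + 1 := by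
      intro l
      induction l with
      | nil => simp
      | cons s ts ih =>
        intro t ht
        have h1 := hlen ts
        have h2 := s.deg_pos
        rw [sdeg_cons]
        rcases List.mem_cons.1 ht with rfl | ht
        · simp; omega
        · have := ih t ht
          simp; omega
    rw [deg_node] at hd
    have hs : sdeg l ≤ N + 1 := le_trans (le_max_right _ _) hd
    have key : ∀ t ∈ l, t ∈ {t : PTree | t.Reduced ∧ t.deg ≤ N} := by
      intro t ht
      refine ⟨hr.2 t ht, ?_⟩
      have h1 := hmem l t ht
      have h2 := List.length_pos_of_mem ht
      have h3 := hr.1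
      omega
    refine ⟨l.attach.map fun t => ⟨t.1, key t.1 t.2⟩, ?_, ?_⟩
    · simp
      exact (hlen l).trans hs
    · simp

end PTree

open PTree

open Classical in
theorem Ncount_eq_sum (S T : OT) (t : PTree) :
    Ncount S T (some t) = ∑ I ∈ (Finset.range t.deg).powerset,
      if contract t I = S ∧ contract t (Finset.range t.deg \ I) = T then 1 else 0 := by
  rw [Ncount, NFinset, Finset.card_filter]; rfl

theorem Ncount_comm (S T V : OT) : Ncount S T V = Ncount T S V := by
  classical
  have key : ∀ S T : OT, Ncount S T V ≤ Ncount T S V := by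
    intro S T
    refine Finset.card_le_card_of_injOn (fun I => Finset.range (degO V) \ I) ?_ ?_
    · intro I hI
      simp only [NFinset, Finset.coe_filter, Finset.mem_powerset, Set.mem_ofPred_eq] at hI ⊢
      refine ⟨Finset.sdiff_subset, hI.2.2, ?_⟩
      rw [Finset.sdiff_sdiff_eq_self hI.1]
      exact hI.2.1
    · intro I hI J hJ h
      simp only [NFinset, Finset.coe_filter, Finset.mem_powerset, Set.mem_ofPred_eq] at hI hJ h
      rw [← Finset.sdiff_sdiff_eq_self hI.1, h, Finset.sdiff_sdiff_eq_self hJ.1]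
  exact le_antisymm (key _ _) (key _ _)

theorem shuffleM_comm (K : Type) [Field K] (S T : OT) : shuffleM K S T = shuffleM K T S := by
  simp only [shuffleM, Ncount_comm S T]

theorem Ncount_none_none (t : PTree) : Ncount none none (some t) = 0 := by
  classical
  rw [Ncount_eq_sum]
  apply Finset.sum_eq_zero
  intro I hI
  rw [if_neg]
  rw [contract_eq_none, contract_eq_none]
  rintro ⟨rfl, h⟩
  have := t.deg_pos
  simp at h; omega

open Classical in
theorem Ncount_none_some (b : PTree) {t : PTree} (h : t.Reduced) :
    Ncount none (some b) (some t) = if b = t then 1 else 0 := by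
  rw [Ncount_eq_sum, Finset.sum_eq_single ∅]
  · simp [contract_empty, contract_range h, eq_comm]
  · intro I _ hI
    rw [if_neg]
    simp [contract_eq_none, hI]
  · simp

open Classical in
theorem Ncount_some_none (b : PTree) {t : PTree} (h : t.Reduced) :
    Ncount (some b) none (some t) = if b = t then 1 else 0 := by
  rw [Ncount_comm, Ncount_none_some b h]

theorem Ncount_none_right (S T : PTree) : Ncount (some S) (some T) none = 0 := by
  classical
  simp [Ncount, NFinset, contractO]

theorem Ncount_deg {S T V : PTree} (h : Ncount (some S) (some T) (some V) ≠ 0) :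
    V.deg = S.deg + T.deg := by
  classical
  rw [Ncount, Finset.card_ne_zero] at h
  obtain ⟨I, hI⟩ := h
  simp only [NFinset, Finset.mem_filter, Finset.mem_powerset] at hI
  obtain ⟨h0, h1, h2⟩ := hI
  change I ⊆ Finset.range V.deg at h0
  rw [deg_contract h0 h1, deg_contract Finset.sdiff_subset h2, add_comm,
    Finset.card_sdiff_add_card_eq_card]
  · exact (Finset.card_range _).symm
  · exact h0

open Classical in
theorem shuffleM_apply (K : Type) [Field K] (S T : PTree) (V : OT) :
    shuffleM K (some S) (some T) V =
      if ROT V then (Ncount (some S) (some T) V : K) else 0 := by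
  have hfin : (Function.support fun V : OT => (∑ᶠ (_ : ROT V),
      Finsupp.single V ((Ncount (some S) (some T) V : K)) : AMod K)).Finite := by
    refine ((finite_reduced (S.deg + T.deg)).image some).subset ?_
    intro V hV
    rw [Function.mem_support] at hV
    have h1 : ROT V := by
      by_contra h
      exact hV (by simp [h])
    rw [finsum_eq_if, if_pos h1] at hV
    have h2 : Ncount (some S) (some T) V ≠ 0 := by
      intro h; exact hV (by simp [h])
    cases V with
    | none => exact absurd (Ncount_none_right S T) h2
    | some V => exact ⟨V, ⟨h1 V rfl, (Ncount_deg h2).le⟩, rfl⟩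
  rw [shuffleM, finsum_eq_sum _ hfin, Finsupp.finsetSum_apply]
  simp only [finsum_eq_if]
  have : ∀ W : OT, (if ROT W then Finsupp.single W ((Ncount (some S) (some T) W : K)) else 0 : AMod K) V
      = if W = V then (if ROT V then (Ncount (some S) (some T) V : K) else 0) else 0 := by
    intro W
    by_cases hW : W = V
    · subst hW
      rw [if_pos rfl]
      split_ifs <;> simp
    · rw [if_neg hW]
      split_ifs
      · rw [Finsupp.single_apply, if_neg hW]
      · rfl
  simp only [this, Finset.sum_ite_eq']
  split_ifs with h1 h2
  · rfl
  · rfl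
  · rename_i h2
    rw [Set.Finite.mem_toFinset, Function.mem_support, not_not, if_pos h2,
      Finsupp.single_eq_zero] at h1
    exact h1.symm
  · rfl


/-- list of contractions of children -/
def cl (l : List PTree) (I : Finset ℕ) : List PTree := (subList l I).map red

theorem cl_nil (I) : cl [] I = [] := by rw [cl, subList]; rfl

theorem cl_cons (t : PTree) (ts : List PTree) (I : Finset ℕ) :
    cl (t :: ts) I = (contract t (lo t.deg I)).toList ++ cl ts (hi t.deg I) := by
  rw [cl, cl, subList_cons, List.map_append, contract]
  congr 1
  by_cases h : lo t.deg I = ∅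
  · simp [h]
  · rw [if_pos (Finset.nonempty_iff_ne_empty.2 h), if_neg h]; rfl

open Classical in
/-- numbers of leaf subsets with given lists of contractions -/
noncomputable def NL (A B l : List PTree) : ℕ :=
  ∑ I ∈ (Finset.range (sdeg l)).powerset,
    if cl l I = A ∧ cl l (Finset.range (sdeg l) \ I) = B then 1 else 0

/-- admissibility of a split -/
def spc (b : Bool) (A : List PTree) : ℕ := if b = true ∧ A = [] then 0 else 1
/-- head of a split -/
def sph (b : Bool) (A : List PTree) : OT := if b then A.head? else none
/-- tail of a split -/
def spt (b : Bool) (A : List PTree) : List PTree := if b then A.tail else A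

open Classical in
theorem split_ind (o : OT) (X A : List PTree) :
    (if o.toList ++ X = A then 1 else 0 : ℕ) =
      ∑ b : Bool, spc b A * (if o = sph b A then 1 else 0) * (if X = spt b A then 1 else 0) := by
  rw [Fintype.sum_bool]
  cases A with
  | nil => cases o <;> simp [spc, sph, spt] <;> (split_ifs <;> simp_all)
  | cons a A => cases o <;> simp [spc, sph, spt, ite_and] <;> (split_ifs <;> simp_all)

theorem NL_cons (A B ts : List PTree) (t : PTree) :
    NL A B (t :: ts) = ∑ b : Bool, ∑ b' : Bool,
      spc b A * spc b' B * Ncount (sph b A) (sph b' B) (some t) * NL (spt b A) (spt b' B) ts := by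
  classical
  have h1 : NL A B (t :: ts) = ∑ I₁ ∈ (Finset.range t.deg).powerset,
      ∑ I₂ ∈ (Finset.range (sdeg ts)).powerset,
        (if (contract t I₁).toList ++ cl ts I₂ = A then 1 else 0) *
        (if (contract t (Finset.range t.deg \ I₁)).toList
          ++ cl ts (Finset.range (sdeg ts) \ I₂) = B then 1 else 0) := by
    rw [← sum_powerset_range_add, NL, sdeg_cons]
    apply Finset.sum_congr rfl
    intro I _
    rw [cl_cons, cl_cons, lo_sdiff, hi_sdiff, ite_and]
    split_ifs <;> simp
  rw [h1]
  simp only [split_ind, Ncount_eq_sum, NL, Finset.sum_mul, Finset.mul_sum, Fintype.sum_bool,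
    ← Finset.sum_add_distrib]
  rw [Finset.sum_comm]
  apply Finset.sum_congr rfl
  intro I _
  apply Finset.sum_congr rfl
  intro J _
  simp only [ite_and]
  split_ifs <;> simp <;> ring

/-- shifted subsets of range -/
def sh (b : Bool) (α : Finset ℕ) : Finset ℕ :=
  if b then insert 0 (α.map ⟨Nat.succ, Nat.succ_injective⟩) else α.map ⟨Nat.succ, Nat.succ_injective⟩

theorem zero_mem_sh (b α) : 0 ∈ sh b α ↔ b = true := by
  unfold sh; split_ifs <;> simp_all
theorem succ_mem_sh (b α j) : j + 1 ∈ sh b α ↔ j ∈ α := by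
  unfold sh; split_ifs <;> simp_all
theorem card_sh (b α) : (sh b α).card = b.toNat + α.card := by
  unfold sh; split_ifs with h
  · rw [Finset.card_insert_of_notMem (by simp), Finset.card_map, h]; simp; omega
  · simp_all
theorem filter_sh (b α j) : (sh b α).filter (· < j + 1) = sh b (α.filter (· < j)) := by
  ext i
  cases i <;> simp [zero_mem_sh, succ_mem_sh]
theorem sh_union (b b' α β k) : sh b α ∪ sh b' β = Finset.range (k + 1) ↔
    (b = true ∨ b' = true) ∧ α ∪ β = Finset.range k := by
  constructor
  · intro h
    refine ⟨?_, ?_⟩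
    · have := congrArg (0 ∈ ·) h
      simpa [zero_mem_sh] using this
    · ext j
      have := congrArg (j + 1 ∈ ·) h
      simpa [succ_mem_sh] using this
  · rintro ⟨h1, h2⟩
    ext j
    cases j with
    | zero => simpa [zero_mem_sh] using h1
    | succ j =>
      have := congrArg (j ∈ ·) h2
      simpa [succ_mem_sh] using this

theorem sum_powerset_range_succ {M : Type*} [AddCommMonoid M] (k : ℕ) (F : Finset ℕ → M) :
    ∑ I ∈ (Finset.range (k + 1)).powerset, F I
      = ∑ b : Bool, ∑ I ∈ (Finset.range k).powerset, F (sh b I) := by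
  rw [Fintype.sum_bool, Finset.range_add_one', Finset.sum_powerset_insert (by simp), add_comm]
  have key : ∀ G : Finset ℕ → M,
      ∑ I ∈ ((Finset.range k).map ⟨Nat.succ, Nat.succ_injective⟩).powerset, G I
        = ∑ I ∈ (Finset.range k).powerset, G (I.map ⟨Nat.succ, Nat.succ_injective⟩) := by
    intro G
    symm
    refine Finset.sum_bij (fun I _ => I.map ⟨Nat.succ, Nat.succ_injective⟩) ?_ ?_ ?_ ?_
    · intro I hI
      rw [Finset.mem_powerset] at hI ⊢
      exact Finset.map_subset_map.2 hI
    · intro I _ J _ h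
      exact Finset.map_injective _ h
    · intro J hJ
      rw [Finset.mem_powerset, Finset.subset_map_iff] at hJ
      obtain ⟨u, hu, rfl⟩ := hJ
      exact ⟨u, Finset.mem_powerset.2 hu, rfl⟩
    · intro I _; rfl
  congr 1
  · exact key _
  · exact key _

theorem length_spt (b : Bool) (A : List PTree) (c : ℕ) :
    b.toNat + c = A.length ↔ spc b A ≠ 0 ∧ c = (spt b A).length := by
  cases b <;> cases A <;> simp [spc, spt]; omega

theorem getD_spt (b : Bool) (A : List PTree) (i : ℕ) (d : PTree) :
    A.getD (b.toNat + i) d = (spt b A).getD i d := by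
  cases b <;> cases A <;> simp [spt, add_comm 1 i]

open Classical in
/-- the entries of the general formula -/
noncomputable def ent (K : Type) [Field K] (ls lt : List PTree) (α β : Finset ℕ) (j : ℕ) : AMod K :=
  if j ∈ α ∧ j ∉ β then
    Finsupp.single (some (ls.getD ((α.filter (· < j)).card) PTree.x)) 1
  else if j ∈ β ∧ j ∉ α then
    Finsupp.single (some (lt.getD ((β.filter (· < j)).card) PTree.x)) 1
  else
    shuffleM K (some (ls.getD ((α.filter (· < j)).card) PTree.x))
      (some (lt.getD ((β.filter (· < j)).card) PTree.x))

theorem ent_swap (K : Type) [Field K] (ls lt : List PTree) (α β : Finset ℕ) (j : ℕ) :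
    ent K ls lt α β j = ent K lt ls β α j := by
  unfold ent
  rw [shuffleM_comm]
  by_cases h1 : j ∈ α <;> by_cases h2 : j ∈ β <;> simp [h1, h2]

theorem ent_succ (K : Type) [Field K] (A B : List PTree) (b b' : Bool) (α β : Finset ℕ) (j : ℕ) :
    ent K A B (sh b α) (sh b' β) (j + 1) = ent K (spt b A) (spt b' B) α β j := by
  simp only [ent, succ_mem_sh, filter_sh, card_sh, getD_spt]

open Classical in
theorem ent_zero (K : Type) [Field K] (A B : List PTree) (b b' : Bool) (α β : Finset ℕ)
    (hA : ∀ t ∈ A, t.Reduced) (hB : ∀ t ∈ B, t.Reduced)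
    (h1 : spc b A ≠ 0) (h2 : spc b' B ≠ 0) (h : b = true ∨ b' = true) (v : PTree) :
    ent K A B (sh b α) (sh b' β) 0 (some v)
      = if v.Reduced then (Ncount (sph b A) (sph b' B) (some v) : K) else 0 := by
  have hrot : ROT (some v) ↔ v.Reduced := by simp [ROT]
  simp only [ent, zero_mem_sh]
  cases b <;> cases b'
  · simp at h
  · cases B with
    | nil => simp [spc] at h2
    | cons a B =>
      simp only [sph, if_true, List.head?_cons]
      simp [Finsupp.single_apply]
      split_ifs with h3 h4 h4
      · rw [Ncount_none_some _ h4, if_pos h3]; simp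
      · exact absurd (h3 ▸ hB a (by simp)) h4
      · rw [Ncount_none_some _ h4, if_neg h3]; simp
      · rfl
  · cases A with
    | nil => simp [spc] at h1
    | cons a A =>
      simp only [sph, if_true, List.head?_cons]
      simp [Finsupp.single_apply]
      split_ifs with h3 h4 h4
      · rw [Ncount_some_none _ h4, if_pos h3]; simp
      · exact absurd (h3 ▸ hA a (by simp)) h4
      · rw [Ncount_some_none _ h4, if_neg h3]; simp
      · rfl
  · cases A with
    | nil => simp [spc] at h1
    | cons a A =>
    cases B with
    | nil => simp [spc] at h2
    | cons a B =>
      simp [sph, shuffleM_apply, hrot]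

theorem listProd_cons_cons (K : Type) [Field K] {σ : Type} (f : σ →₀ K) (fs) (t : σ) (ts) :
    listProd K (f :: fs) (t :: ts) = f t * listProd K fs ts := by
  classical
  rw [listProd, Finsupp.sum_apply, Finsupp.sum]
  simp only [Finsupp.sum_apply, Finsupp.single_apply, List.cons.injEq, ite_and]
  rw [Finset.sum_eq_single t]
  · simp only [if_true, Finsupp.sum]
    rw [Finset.sum_eq_single ts]
    · simp
    · intro b _ hb; simp [hb]
    · intro h; simp [Finsupp.notMem_support_iff.1 h]
  · intro b _ hb; simp [hb]
  · intro h; simp [Finsupp.notMem_support_iff.1 h]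

theorem listProd_length (K : Type) [Field K] {σ : Type} (fs : List (σ →₀ K)) (ts : List σ)
    (h : fs.length ≠ ts.length) : listProd K fs ts = 0 := by
  classical
  induction fs generalizing ts with
  | nil =>
    rw [listProd, Finsupp.single_apply, if_neg]
    rintro rfl; simp at h
  | cons f fs ih =>
    cases ts with
    | cons t ts => rw [listProd_cons_cons, ih, mul_zero]; simpa using h
    | nil =>
      rw [listProd, Finsupp.sum_apply, Finsupp.sum]
      simp [Finsupp.sum_apply]

theorem listProd_nil (K : Type) [Field K] {σ : Type} : listProd K ([] : List (σ →₀ K)) [] = 1 := by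
  simp [listProd]

open Classical in
/-- the sum over `Γ_k` of the coefficients -/
noncomputable def GmL (K : Type) [Field K] (A B l : List PTree) : K :=
  ∑ α ∈ (Finset.range l.length).powerset, ∑ β ∈ (Finset.range l.length).powerset,
    if α.card = A.length ∧ β.card = B.length ∧ α ∪ β = Finset.range l.length then
      listProd K ((List.range l.length).map (ent K A B α β)) (l.map some) else 0

open Classical in
theorem GmL_eq_NL (K : Type) [Field K] (A B l : List PTree)
    (hA : ∀ t ∈ A, t.Reduced) (hB : ∀ t ∈ B, t.Reduced) :
    GmL K A B l = if ∀ t ∈ l, t.Reduced then (NL A B l : K) else 0 := by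
  induction l generalizing A B with
  | nil =>
    rw [GmL, NL]
    simp only [List.length_nil, Finset.range_zero, Finset.powerset_empty, Finset.sum_singleton,
      sdeg, List.map_nil, List.sum_nil, cl_nil, List.range_zero, listProd_nil]
    cases A <;> cases B <;> simp
  | cons v vs ih =>
    have hA' : ∀ b, ∀ t ∈ spt b A, t.Reduced := by
      intro b t ht
      cases b
      · exact hA t ht
      · exact hA t (List.mem_of_mem_tail ht)
    have hB' : ∀ b, ∀ t ∈ spt b B, t.Reduced := by
      intro b t ht
      cases b
      · exact hB t ht
      · exact hB t (List.mem_of_mem_tail ht)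
    have step : GmL K A B (v :: vs) = ∑ b : Bool, ∑ b' : Bool,
        (spc b A * spc b' B : ℕ) *
          (if v.Reduced then (Ncount (sph b A) (sph b' B) (some v) : K) else 0)
          * GmL K (spt b A) (spt b' B) vs := by
      rw [GmL, List.length_cons, sum_powerset_range_succ]
      apply Finset.sum_congr rfl
      intro b _
      simp only [sum_powerset_range_succ]
      rw [Finset.sum_comm]
      apply Finset.sum_congr rfl
      intro b' _
      rw [GmL, Finset.mul_sum]
      apply Finset.sum_congr rfl
      intro α _
      rw [Finset.mul_sum]
      apply Finset.sum_congr rfl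
      intro β _
      simp only [card_sh, length_spt, sh_union]
      by_cases h1 : spc b A = 0
      · simp [h1]
      by_cases h2 : spc b' B = 0
      · simp [h2]
      by_cases h3 : b = true ∨ b' = true
      swap
      · have : b = false ∧ b' = false := by simpa using h3
        obtain ⟨rfl, rfl⟩ := this
        simp [sph, Ncount_none_none]
      have e1 : spc b A = 1 := by unfold spc at *; split_ifs at * <;> simp_all
      have e2 : spc b' B = 1 := by unfold spc at *; split_ifs at * <;> simp_all
      by_cases h4 : α.card = (spt b A).length ∧ β.card = (spt b' B).length ∧
        α ∪ β = Finset.range vs.length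
      · rw [if_pos h4, if_pos ⟨⟨h1, h4.1⟩, ⟨h2, h4.2.1⟩, h3, h4.2.2⟩, e1, e2, List.range_succ_eq_map,
          List.map_cons, List.map_cons, listProd_cons_cons,
          ent_zero K A B b b' α β hA hB h1 h2 h3, List.map_map]
        simp only [Function.comp_def, Nat.succ_eq_add_one, ent_succ]
        simp
      · rw [if_neg h4, if_neg, mul_zero]
        tauto
    rw [step]
    simp only [fun b b' => ih (spt b A) (spt b' B) (hA' b) (hB' b'), NL_cons]
    by_cases hv : v.Reduced
    · by_cases hvs : ∀ t ∈ vs, t.Reduced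
      · have : ∀ t ∈ v :: vs, t.Reduced := by simpa using ⟨hv, hvs⟩
        rw [if_pos this]
        simp only [if_pos hv, if_pos hvs]
        push_cast
        rfl
      · have : ¬ ∀ t ∈ v :: vs, t.Reduced := by
          intro h; exact hvs fun t ht => h t (by simp [ht])
        rw [if_neg this]
        simp only [if_neg hvs]
        simp
    · have : ¬ ∀ t ∈ v :: vs, t.Reduced := by
        intro h; exact hv (h v (by simp))
      rw [if_neg this]
      simp [hv]


theorem subList_empty (l : List PTree) : subList l ∅ = [] := by
  induction l with
  | nil => rw [subList]
  | cons t ts ih =>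
    rw [subList_cons]
    simpa [lo, hi] using ih

theorem contract_node_iff (lv ls : List PTree) (h : 2 ≤ ls.length) (I : Finset ℕ) :
    contract (node lv) I = some (node ls) ↔ cl lv I = ls ∨ cl lv I = [node ls] := by
  by_cases hI : I = ∅
  · subst hI
    have : ls ≠ [] := by rintro rfl; simp at h
    simp [contract_empty, cl, subList_empty, this.symm]
  · rw [contract, if_neg hI, sub, cl, Option.some.injEq]
    by_cases h1 : (subList lv I).length = 1
    · obtain ⟨t, ht⟩ := List.length_eq_one_iff.1 h1
      rw [ht, red_singleton]
      have : [red t] ≠ ls := by rintro rfl; simp at h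
      simp [this]
    · rw [red_node _ h1, PTree.node.injEq]
      have : (subList lv I).map red ≠ [node ls] := by
        intro h2
        apply h1
        simpa using congrArg List.length h2
      simp [this]

theorem Ncount_node (lv ls lt : List PTree) (hs : 2 ≤ ls.length) (ht : 2 ≤ lt.length)
    (hv : lv ≠ []) :
    Ncount (some (node ls)) (some (node lt)) (some (node lv)) =
      NL [node ls] [node lt] lv + NL [node ls] lt lv + NL ls [node lt] lv + NL ls lt lv := by
  classical
  rw [Ncount_eq_sum, deg_node, max_eq_right (sdeg_pos hv)]
  simp only [NL, ← Finset.sum_add_distrib]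
  apply Finset.sum_congr rfl
  intro I _
  simp only [contract_node_iff _ _ hs, contract_node_iff _ _ ht]
  have e1 : ls ≠ [node ls] := by intro h; rw [h] at hs; simp at hs
  have e2 : lt ≠ [node lt] := by intro h; rw [h] at ht; simp at ht
  generalize cl lv I = X
  generalize cl lv (Finset.range (sdeg lv) \ I) = Y
  by_cases h1 : X = ls
  · have h1' : X ≠ [node ls] := h1 ▸ e1
    by_cases h2 : Y = lt
    · have h2' : Y ≠ [node lt] := h2 ▸ e2
      simp only [h1', h2', false_and, and_false, if_false]
      simp [h1, h2]
    · simp only [h1', h2, false_and, and_false, if_false]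
      simp [h1]
  · by_cases h2 : Y = lt
    · have h2' : Y ≠ [node lt] := h2 ▸ e2
      simp only [h1, h2', false_and, and_false, if_false]
      simp [h2]
    · simp [h1, h2]

theorem mapM_id_eq_some (ts : List (Option PTree)) (l : List PTree) :
    (ts.mapM (id : Option PTree → Option PTree) : Option (List PTree)) = some l ↔
      ts = l.map some := by
  induction ts generalizing l with
  | nil => cases l <;> simp
  | cons t ts ih =>
    rw [List.mapM_cons]
    cases t with
    | none => cases l <;> simp
    | some t =>
      cases h : (ts.mapM (id : Option PTree → Option PTree) : Option (List PTree)) with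
      | none =>
        cases l with
        | nil => simp
        | cons a l =>
          have := ih l
          rw [h] at this
          simp at this ⊢
          intro _; exact this
      | some l' =>
        cases l with
        | nil => simp
        | cons a l =>
          have := ih l
          rw [h] at this
          simp at this ⊢
          intro _; exact this

theorem nodeF_apply_node (K : Type) [Field K] (L : List (AMod K)) (lv : List PTree) :
    nodeF K L (some (node lv)) = listProd K L (lv.map some) := by
  classical
  rw [nodeF, Finsupp.sum_apply, Finsupp.sum, Finset.sum_eq_single (lv.map some)]
  · rw [(mapM_id_eq_some _ lv).2 rfl]; simp
  · intro ts _ hts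
    cases h : (ts.mapM (id : Option PTree → Option PTree) : Option (List PTree)) with
    | none => simp
    | some l' =>
      have h' := (mapM_id_eq_some _ _).1 h
      simp only
      rw [Finsupp.single_apply, if_neg]
      intro h2
      simp at h2
      exact hts (h2 ▸ h')
  · intro h
    rw [(mapM_id_eq_some _ lv).2 rfl]
    simp [Finsupp.notMem_support_iff.1 h]

theorem nodeF_apply_none (K : Type) [Field K] (L : List (AMod K)) :
    nodeF K L none = 0 := by
  classical
  rw [nodeF, Finsupp.sum_apply, Finsupp.sum]
  apply Finset.sum_eq_zero
  intro ts _
  cases h : (ts.mapM (id : Option PTree → Option PTree) : Option (List PTree)) with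
  | none => simp
  | some l' => simp

theorem listProd_single (K : Type) [Field K] {σ : Type} (l : List σ) :
    listProd K (l.map fun t => Finsupp.single t (1 : K)) = Finsupp.single l 1 := by
  induction l with
  | nil => rfl
  | cons t ts ih => 
    rw [List.map_cons, listProd, ih, Finsupp.sum_single_index, Finsupp.sum_single_index] <;>
      simp [Finsupp.sum]

theorem nodeF_single (K : Type) [Field K] (l : List PTree) :
    nodeF K (l.map fun t => Finsupp.single (some t) (1 : K)) = Finsupp.single (some (node l)) 1 := by
  have := listProd_single K (l.map (some : PTree → OT))
  rw [List.map_map] at this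
  simp only [Function.comp_def] at this
  rw [nodeF, this, Finsupp.sum_single_index]
  · rw [(mapM_id_eq_some _ l).2 rfl]
  · rw [(mapM_id_eq_some _ l).2 rfl]; simp

/-- general formula -/
noncomputable def FN (K : Type) [Field K] (A B : List PTree) (k : ℕ)
    (p : Finset ℕ × Finset ℕ) : AMod K :=
  nodeF K ((List.range k).map (ent K A B p.1 p.2))

theorem FN_swap (K : Type) [Field K] (A B : List PTree) (k : ℕ) (α β : Finset ℕ) :
    FN K A B k (α, β) = FN K B A k (β, α) := by
  simp only [FN]
  congr 2
  funext j
  exact ent_swap K A B α β j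

theorem FN_sum (K : Type) [Field K] (A B : List PTree) (k : ℕ) (lv : List PTree) :
    ∑ p ∈ GammaF k A.length B.length, FN K A B k p (some (node lv)) =
      if k = lv.length then GmL K A B lv else 0 := by
  classical
  split_ifs with h
  · subst h
    rw [GammaF, Finset.sum_filter, Finset.sum_product, GmL]
    simp only [FN, nodeF_apply_node]
  · apply Finset.sum_eq_zero
    intro p _
    rw [FN, nodeF_apply_node, listProd_length]
    simpa using h

theorem mem_GammaF {k m n : ℕ} {α β : Finset ℕ} : (α, β) ∈ GammaF k m n ↔
    α.card = m ∧ β.card = n ∧ α ∪ β = Finset.range k := by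
  simp only [GammaF, Finset.mem_filter, Finset.mem_product, Finset.mem_powerset]
  constructor
  · exact fun h => h.2
  · intro h
    refine ⟨⟨?_, ?_⟩, h⟩
    · rw [← h.2.2]; exact Finset.subset_union_left
    · rw [← h.2.2]; exact Finset.subset_union_right

theorem fnth_singleton (ν : ℕ) : fnth {ν} 0 = ν := by simp [fnth]

theorem FN_case2 (K : Type) [Field K] (S : PTree) (lt : List PTree) (k ν : ℕ) (β : Finset ℕ)
    (hβ : β.card = lt.length) (h : {ν} ∪ β = Finset.range k) :
    FN K [S] lt k ({ν}, β) =
      if k = lt.length + 1 then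
        Finsupp.single (some (node (lt.insertIdx ν S))) 1
      else
        nodeF K (lt.mapIdx fun i t =>
          if i = ν then shuffleM K (some t) (some S) else Finsupp.single (some t) 1) := by
  have hmem : ∀ j, (j = ν ∨ j ∈ β) ↔ j < k := by
    intro j
    have := congrArg (j ∈ ·) h
    simpa using this
  have hν : ν < k := (hmem ν).1 (.inl rfl)
  split_ifs with hk
  · rw [← nodeF_single, FN]
    congr 1
    have hνβ : ν ∉ β := by
      intro hh
      rw [Finset.union_eq_right.2 (by simpa using hh)] at h
      rw [h] at hβ
      simp at hβ
      omega
    have hβ' : ∀ j, j ∈ β ↔ j < k ∧ j ≠ ν := by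
      intro j
      have := hmem j
      by_cases hj : j = ν
      · subst hj; simp [hνβ]
      · simp [hj] at this; simp [this, hj]
    apply List.ext_getElem
    · rw [List.length_map, List.length_map, List.length_range, List.length_insertIdx_of_le_length]
      · exact hk
      · omega
    · intro j h1 h2
      simp only [List.length_map, List.length_range] at h1
      simp only [List.getElem_map, List.getElem_range, List.getElem_insertIdx]
      rcases lt_trichotomy j ν with hj | hj | hj
      · have hf : β.filter (· < j) = Finset.range j := by
          ext i; simp [hβ']; omega
        have hjl : j < lt.length := by omega
        simp only [ent, hf, hβ', Finset.mem_singleton]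
        simp [hj, h1, hj.ne, hjl]
      · subst hj
        simp [ent, hνβ]
      · have hf : β.filter (· < j) = (Finset.range j).erase ν := by
          ext i; simp [hβ']; omega
        have hjl : j - 1 < lt.length := by omega
        have hj' : ¬ j < ν := by omega
        have hc : ((Finset.range j).erase ν).card = j - 1 := by
          rw [Finset.card_erase_of_mem (by simpa using hj), Finset.card_range]
        simp only [ent, hf, hβ', Finset.mem_singleton, hc]
        simp [hj', h1, hj.ne', hjl]
  · have hle : k ≤ lt.length + 1 := by
      have := Finset.card_union_le {ν} β
      rw [h, hβ] at this
      simp at this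
      omega
    have hsub : β ⊆ Finset.range k := by rw [← h]; exact Finset.subset_union_right
    have hge := Finset.card_le_card hsub
    rw [hβ, Finset.card_range] at hge
    have hk' : k = lt.length := by omega
    have hβ' : β = Finset.range k :=
      Finset.eq_of_subset_of_card_le hsub (by rw [hβ, Finset.card_range, hk'])
    rw [FN]
    congr 1
    apply List.ext_getElem
    · simp [hk']
    · intro j h1 h2
      simp only [List.length_map, List.length_range] at h1
      simp only [List.getElem_map, List.getElem_range, List.getElem_mapIdx]
      have hf : β.filter (· < j) = Finset.range j := by
        ext i; simp [hβ']; omega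
      have hjl : j < lt.length := by omega
      have hjβ : j ∈ β := by simpa [hβ'] using h1
      simp only [ent, hf, Finset.mem_singleton, hjβ]
      by_cases hj : j = ν
      · subst hj
        rw [shuffleM_comm]
        simp [hjl]
      · simp [hj, hjl]

theorem Rab_case1 (K : Type) [Field K] (ls lt : List PTree) (k : ℕ) (hk : 2 ≤ k)
    (p : Finset ℕ × Finset ℕ) (hp : p ∈ GammaF k 1 1) :
    Rab K ls lt k p = FN K [node ls] [node lt] k p := by
  obtain ⟨α, β⟩ := p
  obtain ⟨h1, h2, h⟩ := mem_GammaF.1 hp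
  obtain ⟨ν, rfl⟩ := Finset.card_eq_one.1 h1
  rw [FN_case2 K _ _ k ν β (by simpa using h2) h]
  have hle : k ≤ 2 := by
    have := Finset.card_union_le {ν} β
    rw [h, h2] at this
    simpa using this
  have hk2 : k = 2 := by omega
  have hν : ν < k := by
    rw [← Finset.mem_range, ← h]; simp
  subst hk2
  rw [Rab]
  simp only [h1, h2, and_self, if_true]
  interval_cases ν <;> simp

theorem Rab_case2 (K : Type) [Field K] (ls lt : List PTree) (k : ℕ) (hn : 2 ≤ lt.length)
    (p : Finset ℕ × Finset ℕ) (hp : p ∈ GammaF k 1 lt.length) :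
    Rab K ls lt k p = FN K [node ls] lt k p := by
  obtain ⟨α, β⟩ := p
  obtain ⟨h1, h2, h⟩ := mem_GammaF.1 hp
  obtain ⟨ν, rfl⟩ := Finset.card_eq_one.1 h1
  rw [FN_case2 K _ _ k ν β (by simpa using h2) h]
  have h3 : ¬ β.card = 1 := by omega
  rw [Rab]
  simp only [h1, h3, and_false, if_false, if_true, fnth_singleton]

theorem Rab_case2' (K : Type) [Field K] (ls lt : List PTree) (k : ℕ) (hm : 2 ≤ ls.length)
    (p : Finset ℕ × Finset ℕ) (hp : p ∈ GammaF k ls.length 1) :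
    Rab K ls lt k p = FN K ls [node lt] k p := by
  obtain ⟨α, β⟩ := p
  obtain ⟨h1, h2, h⟩ := mem_GammaF.1 hp
  obtain ⟨ν, rfl⟩ := Finset.card_eq_one.1 h2
  rw [FN_swap, FN_case2 K _ _ k ν α (by simpa using h1) (by rwa [Finset.union_comm])]
  have h3 : ¬ α.card = 1 := by omega
  rw [Rab]
  simp only [h2, h3, false_and, if_false, if_true, fnth_singleton]

theorem Rab_case3 (K : Type) [Field K] (ls lt : List PTree) (k : ℕ) (hm : 2 ≤ ls.length)
    (hn : 2 ≤ lt.length)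
    (p : Finset ℕ × Finset ℕ) (hp : p ∈ GammaF k ls.length lt.length) :
    Rab K ls lt k p = FN K ls lt k p := by
  obtain ⟨α, β⟩ := p
  obtain ⟨h1, h2, h⟩ := mem_GammaF.1 hp
  have h3 : ¬ α.card = 1 := by omega
  have h4 : ¬ β.card = 1 := by omega
  rw [Rab]
  simp only [h3, h4, false_and, if_false]
  rfl

theorem GammaF_disj {k m n m' n' : ℕ} (h : m ≠ m' ∨ n ≠ n') :
    Disjoint (GammaF k m n) (GammaF k m' n') := by
  rw [Finset.disjoint_left]
  rintro ⟨α, β⟩ h1 h2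
  rw [mem_GammaF] at h1 h2
  omega

theorem sum_GammaBar (K : Type) [Field K] (ls lt : List PTree) (k : ℕ) (hm : 2 ≤ ls.length)
    (hn : 2 ≤ lt.length) (hk : 2 ≤ k) :
    ∑ p ∈ GammaBar k ls.length lt.length, Rab K ls lt k p =
      ∑ p ∈ GammaF k 1 1, FN K [node ls] [node lt] k p
      + ∑ p ∈ GammaF k 1 lt.length, FN K [node ls] lt k p
      + ∑ p ∈ GammaF k ls.length 1, FN K ls [node lt] k p
      + ∑ p ∈ GammaF k ls.length lt.length, FN K ls lt k p := by
  rw [GammaBar, Finset.sum_union, Finset.sum_union, Finset.sum_union]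
  · rw [Finset.sum_congr rfl (Rab_case1 K ls lt k hk), Finset.sum_congr rfl (Rab_case2 K ls lt k hn),
      Finset.sum_congr rfl (Rab_case2' K ls lt k hm), Finset.sum_congr rfl (Rab_case3 K ls lt k hm hn)]
  · exact GammaF_disj (by omega)
  · rw [Finset.disjoint_union_left]
    exact ⟨GammaF_disj (by omega), GammaF_disj (by omega)⟩
  · rw [Finset.disjoint_union_left, Finset.disjoint_union_left]
    exact ⟨⟨GammaF_disj (by omega), GammaF_disj (by omega)⟩, GammaF_disj (by omega)⟩

theorem GmL_big (K : Type) [Field K] (A B l : List PTree) (h : A.length + B.length < l.length) :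
    GmL K A B l = 0 := by
  rw [GmL]
  apply Finset.sum_eq_zero
  intro α _
  apply Finset.sum_eq_zero
  intro β _
  rw [if_neg]
  rintro ⟨h1, h2, h3⟩
  have := Finset.card_union_le α β
  rw [h1, h2, h3, Finset.card_range] at this
  omega

/-- For finite planar reduced rooted trees `S = node [S_1,…,S_m]` and
`T = node [T_1,…,T_n]` of arities `m, n ≥ 2`,
`S ⧢ T = Σ_{k=2}^{m+n} Σ_{(α,β) ∈ Γ̄_k(m,n)} R_{(α,β)}`. -/
theorem shuffle_eq_sum_Rab (K : Type) [Field K] (ls lt : List PTree)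
    (hm : 2 ≤ ls.length) (hn : 2 ≤ lt.length)
    (hS : (PTree.node ls).Reduced) (hT : (PTree.node lt).Reduced) :
    shuffleM K (some (PTree.node ls)) (some (PTree.node lt))
      = ∑ k ∈ Finset.Icc 2 (ls.length + lt.length),
          ∑ p ∈ GammaBar k ls.length lt.length, Rab K ls lt k p := by
  classical
  have hS' := (reduced_node.1 hS).2
  have hT' := (reduced_node.1 hT).2
  have hSs : ∀ t ∈ [node ls], t.Reduced := by simpa using hS
  have hTs : ∀ t ∈ [node lt], t.Reduced := by simpa using hT
  have hsum : ∑ k ∈ Finset.Icc 2 (ls.length + lt.length),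
          ∑ p ∈ GammaBar k ls.length lt.length, Rab K ls lt k p =
      ∑ k ∈ Finset.Icc 2 (ls.length + lt.length),
      (∑ p ∈ GammaF k 1 1, FN K [node ls] [node lt] k p
      + ∑ p ∈ GammaF k 1 lt.length, FN K [node ls] lt k p
      + ∑ p ∈ GammaF k ls.length 1, FN K ls [node lt] k p
      + ∑ p ∈ GammaF k ls.length lt.length, FN K ls lt k p) := by
    apply Finset.sum_congr rfl
    intro k hk
    exact sum_GammaBar K ls lt k hm hn (Finset.mem_Icc.1 hk).1
  rw [hsum]
  ext V
  rw [shuffleM_apply, Finsupp.finsetSum_apply]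
  simp only [Finsupp.add_apply, Finsupp.finsetSum_apply]
  cases V with
  | none =>
    rw [Ncount_none_right]
    simp [FN, nodeF_apply_none]
  | some V =>
    obtain ⟨lv⟩ := V
    have f11 := fun k => FN_sum K [node ls] [node lt] k lv
    have f12 := fun k => FN_sum K [node ls] lt k lv
    have f21 := fun k => FN_sum K ls [node lt] k lv
    have f22 := fun k => FN_sum K ls lt k lv
    simp only [List.length_singleton] at f11 f12 f21
    simp only [f11, f12, f21, f22]
    have hcol : ∑ k ∈ Finset.Icc 2 (ls.length + lt.length),
        ((if k = lv.length then GmL K [node ls] [node lt] lv else 0)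
        + (if k = lv.length then GmL K [node ls] lt lv else 0)
        + (if k = lv.length then GmL K ls [node lt] lv else 0)
        + (if k = lv.length then GmL K ls lt lv else 0)) =
        if 2 ≤ lv.length then GmL K [node ls] [node lt] lv + GmL K [node ls] lt lv
          + GmL K ls [node lt] lv + GmL K ls lt lv else 0 := by
      simp only [Finset.sum_add_distrib, Finset.sum_ite_eq', Finset.mem_Icc]
      by_cases h2 : 2 ≤ lv.length
      · by_cases h3 : lv.length ≤ ls.length + lt.length
        · simp [h2, h3]
        · rw [GmL_big K [node ls] [node lt] lv (by simp; omega),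
            GmL_big K [node ls] lt lv (by simp; omega),
            GmL_big K ls [node lt] lv (by simp; omega), GmL_big K ls lt lv (by omega)]
          simp
      · simp [h2]
    rw [hcol, GmL_eq_NL K _ _ lv hSs hTs, GmL_eq_NL K _ _ lv hSs hT', GmL_eq_NL K _ _ lv hS' hTs,
      GmL_eq_NL K _ _ lv hS' hT']
    have hrot : ROT (some (node lv)) ↔ lv.length ≠ 1 ∧ ∀ t ∈ lv, t.Reduced := by
      rw [← reduced_node]; simp [ROT]
    by_cases hnil : lv = []
    · subst hnil
      have : Ncount (some (node ls)) (some (node lt)) (some (node [])) = 0 := by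
        by_contra h
        have := Ncount_deg h
        have h1 := (node ls).deg_pos
        have h2 := (node lt).deg_pos
        rw [deg_node] at this
        simp [sdeg] at this
        omega
      rw [this]
      simp
    · have hpos := List.length_pos_of_ne_nil hnil
      rw [Ncount_node lv ls lt hm hn hnil]
      by_cases h2 : 2 ≤ lv.length
      · by_cases h3 : ∀ t ∈ lv, t.Reduced
        · rw [if_pos (hrot.2 ⟨by omega, h3⟩), if_pos h2]
          simp only [if_pos h3]
          push_cast
          rfl
        · rw [if_neg fun h => h3 (hrot.1 h).2]
          simp only [if_neg h3]
          simp
      · rw [if_neg h2, if_neg]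
        rw [hrot]
        rintro ⟨h, _⟩
        omega
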